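/- Sufficient decrease for CBCG with adaptive stepsize: for every k ≥ 0 and every i ∈ {1,…,N}, H(x^k) − H(x^{k+1}) ≥ (β_min/(2N)) ‖A(x^k − x^{k,i−1})‖², where β_min = min{β_1,…,β_N}. -/

import Mathlib

open scoped RealInnerProductSpace BigOperators
noncomputable section

/-- The `i`-th block space `ℝ^{n_i}` (with the Euclidean norm). -/
abbrev Blk {N : ℕ} (nb : Fin N → ℕ) (i : Fin N) : Type := EuclideanSpace ℝ (Fin (nb i))

/-- The full space `ℝ^n`, `n = n_1 + ⋯ + n_N`, seen as the `ℓ²`-product of the blocks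
(this is isometric to `ℝ^n` with the Euclidean norm, respecting the block structure). -/
abbrev FullSpc {N : ℕ} (nb : Fin N → ℕ) : Type := PiLp 2 fun i => Blk nb i

/-- The inclusion of the `i`-th block into the full space, i.e. the linear map
`U_i` represented by the submatrix of the identity matrix corresponding to block `i`
(so that `x_i = U_iᵀ x` is simply `x i`). -/
def blkIncl {N : ℕ} (nb : Fin N → ℕ) (i : Fin N) : Blk nb i →L[ℝ] FullSpc nb :=
  LinearMap.toContinuousLinearMap
    (((WithLp.linearEquiv 2 ℝ (∀ i, Blk nb i)).symm.toLinearMap).comp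
      (LinearMap.single ℝ (fun i => Blk nb i) i))

/-- `∇ f (x) = Aᵀ ∇F(Ax)` for `f = F ∘ A`. -/
def gradFull {N m : ℕ} (nb : Fin N → ℕ) (A : FullSpc nb →L[ℝ] EuclideanSpace ℝ (Fin m))
    (gradF : EuclideanSpace ℝ (Fin m) → EuclideanSpace ℝ (Fin m)) (x : FullSpc nb) :
    FullSpc nb :=
  (ContinuousLinearMap.adjoint A) (gradF (A x))

/-- `∇_i f (x) = U_iᵀ ∇ f(x) = A_iᵀ ∇F(Ax)` where `A_i = A U_i`. -/
def gradBlk {N m : ℕ} (nb : Fin N → ℕ) (A : FullSpc nb →L[ℝ] EuclideanSpace ℝ (Fin m))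
    (gradF : EuclideanSpace ℝ (Fin m) → EuclideanSpace ℝ (Fin m)) (i : Fin N) (x : FullSpc nb) :
    Blk nb i :=
  (ContinuousLinearMap.adjoint (A.comp (blkIncl nb i))) (gradF (A x))


theorem blkIncl_same {N : ℕ} (nb : Fin N → ℕ) (i : Fin N) (h : Blk nb i) :
    blkIncl nb i h i = h := by
  simp [blkIncl]

theorem blkIncl_ne {N : ℕ} (nb : Fin N → ℕ) (i j : Fin N) (hij : j ≠ i) (h : Blk nb i) :
    blkIncl nb i h j = 0 := by
  simp [blkIncl, hij]

/-- Descent lemma along a segment. -/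
theorem descent_aux {E : Type*} [NormedAddCommGroup E] [InnerProductSpace ℝ E] [CompleteSpace E]
    (F : E → ℝ) (G : E → E) (u d : E) (b : ℝ)
    (hG : ∀ t ∈ Set.Icc (0 : ℝ) 1, HasGradientAt F (G (u + t • d)) (u + t • d))
    (hL : ∀ t ∈ Set.Icc (0 : ℝ) 1, ‖G (u + t • d) - G u‖ ≤ b * ‖t • d‖) :
    F (u + d) ≤ F u + ⟪G u, d⟫ + b / 2 * ‖d‖ ^ 2 := by
  have hder : ∀ t ∈ Set.Icc (0 : ℝ) 1, HasDerivAt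
      (fun t : ℝ => F (u + t • d) - t * ⟪G u, d⟫ - t ^ 2 * (b / 2 * ‖d‖ ^ 2))
      (⟪G (u + t • d), d⟫ - ⟪G u, d⟫ - 2 * t * (b / 2 * ‖d‖ ^ 2)) t := by
    intro t ht
    have h1 : HasDerivAt (fun t : ℝ => u + t • d) d t := by
      simpa using ((hasDerivAt_id t).smul_const d).const_add u
    have h2 := (hG t ht).hasFDerivAt.comp_hasDerivAt t h1
    have h3 : HasDerivAt (fun t : ℝ => t * ⟪G u, d⟫) ⟪G u, d⟫ t := by
      simpa using (hasDerivAt_id t).mul_const ⟪G u, d⟫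
    have h4 : HasDerivAt (fun t : ℝ => t ^ 2 * (b / 2 * ‖d‖ ^ 2))
        (2 * t * (b / 2 * ‖d‖ ^ 2)) t := by
      simpa using (hasDerivAt_pow 2 t).mul_const (b / 2 * ‖d‖ ^ 2)
    have h5 := (h2.sub h3).sub h4
    have h6 : (InnerProductSpace.toDual ℝ E (G (u + t • d))) d = ⟪G (u + t • d), d⟫ := by simp
    rw [h6] at h5
    exact h5
  have hanti : AntitoneOn
      (fun t : ℝ => F (u + t • d) - t * ⟪G u, d⟫ - t ^ 2 * (b / 2 * ‖d‖ ^ 2))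
      (Set.Icc (0 : ℝ) 1) := by
    apply antitoneOn_of_deriv_nonpos (convex_Icc 0 1)
    · exact fun t ht => (hder t ht).continuousAt.continuousWithinAt
    · exact fun t ht => (hder t (interior_subset ht)).differentiableAt.differentiableWithinAt
    · intro t ht
      have ht' := interior_subset ht
      rw [(hder t ht').deriv, ← inner_sub_left]
      have h1 := real_inner_le_norm (G (u + t • d) - G u) d
      have h2 := mul_le_mul_of_nonneg_right (hL t ht') (norm_nonneg d)
      rw [norm_smul, Real.norm_of_nonneg ht'.1] at h2
      nlinarith
  have h := hanti (by simp : (0 : ℝ) ∈ Set.Icc (0 : ℝ) 1)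
    (by simp : (1 : ℝ) ∈ Set.Icc (0 : ℝ) 1) zero_le_one
  simp at h
  linarith

/-- **Sufficient decrease for CBCG with adaptive stepsize**: for every `k ≥ 0` and every block
`i`, `H(x^k) − H(x^{k+1}) ≥ (β_min/(2N)) ‖A(x^k − x^{k,i−1})‖²`, where `β_min = min_i β_i`. -/
theorem cbcg_adaptive_sufficient_decrease
    {N m : ℕ} (hN : 0 < N) (nb : Fin N → ℕ) (hnb : ∀ i, 0 < nb i)
    (A : FullSpc nb →L[ℝ] EuclideanSpace ℝ (Fin m))
    (Xi : ∀ i, Set (Blk nb i))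
    (hXcpt : ∀ i, IsCompact (Xi i)) (hXconv : ∀ i, Convex ℝ (Xi i))
    (hXne : ∀ i, (Xi i).Nonempty)
    (D : Fin N → ℝ) (hD : ∀ i, Metric.diam (Xi i) = D i)
    (g : ∀ i, Blk nb i → ℝ) (hgconv : ∀ i, ConvexOn ℝ (Xi i) (g i))
    (F : EuclideanSpace ℝ (Fin m) → ℝ)
    (hFconv : ConvexOn ℝ Set.univ F)
    (gradF : EuclideanSpace ℝ (Fin m) → EuclideanSpace ℝ (Fin m))
    (hgradF : ∀ x : FullSpc nb, (∀ i, x i ∈ Xi i) → HasGradientAt F (gradF (A x)) (A x))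
    (LF : ℝ)
    (hLF : ∀ x : FullSpc nb, (∀ i, x i ∈ Xi i) → ∀ y : FullSpc nb, (∀ i, y i ∈ Xi i) →
      ‖gradF (A x) - gradF (A y)‖ ≤ LF * ‖A x - A y‖)
    (β : Fin N → ℝ) (hβpos : ∀ i, 0 < β i)
    (hβ : ∀ (i : Fin N) (z : FullSpc nb), (∀ j, z j ∈ Xi j) →
      ∀ h : Blk nb i, (∀ j, (z + blkIncl nb i h) j ∈ Xi j) →
      ‖gradF (A (z + blkIncl nb i h)) - gradF (A z)‖ ≤ β i * ‖A.comp (blkIncl nb i) h‖)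
    (βmin : ℝ) (hβmin : IsLeast (Set.range β) βmin)
    -- blockwise linear-oracle selections `p_i(x) ∈ argmin_{p_i ∈ X_i} {⟨∇_i f(x), p_i⟩ + g_i(p_i)}`
    (piSel : ∀ i : Fin N, FullSpc nb → Blk nb i)
    (hpiSel : ∀ (i : Fin N) (z : FullSpc nb), (∀ j, z j ∈ Xi j) →
      piSel i z ∈ Xi i ∧ ∀ q ∈ Xi i,
        ⟪gradBlk nb A gradF i z, piSel i z⟫ + g i (piSel i z) ≤
          ⟪gradBlk nb A gradF i z, q⟫ + g i q)
    -- the CBCG iterates: `x k` is `x^k` and `y k i` is `x^{k,i}` for `0 ≤ i ≤ N`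
    (x : ℕ → FullSpc nb) (y : ℕ → ℕ → FullSpc nb)
    (pk : ℕ → (i : Fin N) → Blk nb i) (α : ℕ → Fin N → ℝ)
    (hx0 : ∀ i, x 0 i ∈ Xi i)
    (hy0 : ∀ k, y k 0 = x k)
    (hyN : ∀ k, x (k + 1) = y k N)
    (hα01 : ∀ k i, α k i ∈ Set.Icc (0 : ℝ) 1)
    (hpk : ∀ (k : ℕ) (i : Fin N), pk k i ∈ Xi i ∧ ∀ q ∈ Xi i,
      ⟪gradBlk nb A gradF i (y k i.val), pk k i⟫ + g i (pk k i) ≤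
        ⟪gradBlk nb A gradF i (y k i.val), q⟫ + g i q)
    (hupd : ∀ (k : ℕ) (i : Fin N),
      y k (i.val + 1) = y k i.val + α k i • blkIncl nb i (pk k i - y k i.val i))
    -- the adaptive stepsize `α_i^k = min{ S_i(x^{k,i−1}) / (β_i ‖A_i(p_i^k − x_i^k)‖²), 1 }`
    (hαada : ∀ (k : ℕ) (i : Fin N), α k i =
      min ((⟪gradBlk nb A gradF i (y k i.val), y k i.val i - piSel i (y k i.val)⟫ +
          g i (y k i.val i) - g i (piSel i (y k i.val))) /
        (β i * ‖A.comp (blkIncl nb i) (pk k i - x k i)‖ ^ 2)) 1)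
    :
    ∀ (k : ℕ) (i : Fin N),
      βmin / (2 * (N : ℝ)) * ‖A (x k - y k i.val)‖ ^ 2 ≤
        (F (A (x k)) + ∑ j, g j (x k j)) - (F (A (x (k + 1))) + ∑ j, g j (x (k + 1) j)) := by
  have hmem : ∀ k, (∀ l, x k l ∈ Xi l) → ∀ j, j ≤ N →
      (∀ l, y k j l ∈ Xi l) ∧ ∀ l : Fin N, j ≤ l.val → y k j l = x k l := by
    intro k hk j
    induction j with
    | zero => intro _; rw [hy0]; exact ⟨hk, fun _ _ => rfl⟩
    | succ j ih =>
      intro hj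
      obtain ⟨h1, h2⟩ := ih (by omega)
      have hu := hupd k ⟨j, by omega⟩
      simp only at hu
      rw [hu]
      constructor
      · intro l
        by_cases hl : l = ⟨j, by omega⟩
        · subst hl
          simp only [PiLp.add_apply, PiLp.smul_apply, blkIncl_same]
          exact (hXconv _).add_smul_sub_mem (h1 _) (hpk k _).1 (hα01 k _)
        · simpa [blkIncl_ne _ _ _ hl] using h1 l
      · intro l hl
        have hl' : l ≠ ⟨j, by omega⟩ := by
          intro h
          have := congrArg Fin.val h
          simp only at this
          omega
        simpa [blkIncl_ne _ _ _ hl'] using h2 l (by omega)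
  have hxmem : ∀ k, ∀ l, x k l ∈ Xi l := by
    intro k
    induction k with
    | zero => exact hx0
    | succ k ih => rw [hyN]; exact (hmem k ih N le_rfl).1
  have hstep : ∀ (k : ℕ) (i : Fin N),
      βmin / 2 * ‖A (y k i.val) - A (y k (i.val + 1))‖ ^ 2 ≤
        (F (A (y k i.val)) + ∑ j, g j (y k i.val j)) -
        (F (A (y k (i.val + 1))) + ∑ j, g j (y k (i.val + 1) j)) := by
    intro k i
    obtain ⟨hz, hzx⟩ := hmem k (hxmem k) i.val i.2.le
    have hz' := (hmem k (hxmem k) (i.val + 1) i.2).1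
    have hα := hαada k i
    have hu := hupd k i
    have hp := hpk k i
    have hs := hpiSel i _ hz
    have ha := hα01 k i
    rw [← hzx i le_rfl] at hα
    generalize y k (i.val + 1) = z' at *
    generalize y k i.val = z at *
    generalize pk k i = p at *
    generalize α k i = a at *
    obtain ⟨ha0, ha1⟩ := ha
    have hbm : βmin ≤ β i := hβmin.2 ⟨i, rfl⟩
    have hb := hβpos i
    set S : ℝ := ⟪gradBlk nb A gradF i z, z i - p⟫ + g i (z i) - g i p with hS
    have hSeq : ⟪gradBlk nb A gradF i z, z i - piSel i z⟫ + g i (z i) - g i (piSel i z) = S := by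
      have e1 := hp.2 _ hs.1
      have e2 := hs.2 _ hp.1
      rw [hS, inner_sub_right, inner_sub_right]
      linarith
    rw [hSeq] at hα
    set d : EuclideanSpace ℝ (Fin m) := A.comp (blkIncl nb i) (p - z i) with hd
    have hAz' : A z' = A z + a • d := by
      rw [hu, map_add, map_smul]; rfl
    have hinner : ⟪gradF (A z), d⟫ = ⟪gradBlk nb A gradF i z, p - z i⟫ := by
      rw [gradBlk, ContinuousLinearMap.adjoint_inner_left]
    -- the segment
    have hseg : ∀ t ∈ Set.Icc (0 : ℝ) 1,
        ∀ j, (z + blkIncl nb i (t • a • (p - z i))) j ∈ Xi j := by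
      intro t ht j
      by_cases hj : j = i
      · subst hj
        simp only [PiLp.add_apply, blkIncl_same, smul_smul]
        exact (hXconv _).add_smul_sub_mem (hz _) hp.1
          ⟨mul_nonneg ht.1 ha0, mul_le_one₀ ht.2 ha0 ha1⟩
      · simpa [blkIncl_ne _ _ _ hj] using hz j
    have hAseg : ∀ t : ℝ, A (z + blkIncl nb i (t • a • (p - z i))) = A z + t • a • d := by
      intro t
      rw [map_add, map_smul, map_smul, map_smul, map_smul]; rfl
    have hdesc := descent_aux F gradF (A z) (a • d) (β i)
      (fun t ht => by
        have := hgradF _ (hseg t ht)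
        rwa [hAseg] at this)
      (fun t ht => by
        have := hβ i z hz _ (hseg t ht)
        rw [hAseg, map_smul, map_smul] at this
        exact this)
    rw [← hAz', inner_smul_right, hinner, norm_smul, Real.norm_of_nonneg ha0] at hdesc
    -- the nonsmooth part
    have hgi : g i (z' i) ≤ (1 - a) * g i (z i) + a * g i p := by
      have h1 : z' i = (1 - a) • z i + a • p := by
        rw [hu]
        simp only [PiLp.add_apply, PiLp.smul_apply, blkIncl_same]
        module
      rw [h1]
      exact (hgconv i).2 (hz i) hp.1 (by linarith) ha0 (by ring)
    have hgsum : ∑ j, g j (z j) - ∑ j, g j (z' j) = g i (z i) - g i (z' i) := by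
      rw [← Finset.sum_sub_distrib]
      apply Finset.sum_eq_single i
      · intro j _ hj
        rw [hu]
        simp [blkIncl_ne _ _ _ hj]
      · simp
    have hnorm : ‖A z - A z'‖ ^ 2 = a ^ 2 * ‖d‖ ^ 2 := by
      rw [hAz', sub_add_cancel_left, norm_neg, norm_smul, Real.norm_of_nonneg ha0, mul_pow]
    have hkey : a * (β i * ‖d‖ ^ 2) ≤ S ∨ a = 0 := by
      by_cases h0 : β i * ‖d‖ ^ 2 = 0
      · right
        rw [hα, h0]
        simp
      · left
        have hpos : 0 < β i * ‖d‖ ^ 2 := lt_of_le_of_ne (by positivity) (Ne.symm h0)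
        rw [← le_div_iff₀ hpos]
        exact hα.le.trans (min_le_left _ _)
    have hkey2 : a ^ 2 * (β i * ‖d‖ ^ 2) ≤ a * S := by
      rcases hkey with h | h
      · nlinarith [mul_le_mul_of_nonneg_left h ha0]
      · simp [h]
    have hneg : ⟪gradBlk nb A gradF i z, p - z i⟫ = - (S - g i (z i) + g i p) := by
      rw [hS, inner_sub_right, inner_sub_right]; ring
    rw [hneg] at hdesc
    rw [hnorm]
    have hbm2 : βmin * (a ^ 2 * ‖d‖ ^ 2) ≤ β i * (a ^ 2 * ‖d‖ ^ 2) :=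
      mul_le_mul_of_nonneg_right hbm (by positivity)
    nlinarith
  intro k i
  have hβm : 0 < βmin := by
    obtain ⟨j, hj⟩ := hβmin.1
    rw [← hj]; exact hβpos j
  have hN' : (0 : ℝ) < N := by exact_mod_cast hN
  have htot := Finset.sum_le_sum (s := Finset.range N)
    (f := fun l => βmin / 2 * ‖A (y k l) - A (y k (l + 1))‖ ^ 2)
    (g := fun l => (F (A (y k l)) + ∑ j, g j (y k l j)) -
        (F (A (y k (l + 1))) + ∑ j, g j (y k (l + 1) j))) (fun l hl =>
    hstep k ⟨l, Finset.mem_range.1 hl⟩)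
  have htel := Finset.sum_range_sub' (fun l => F (A (y k l)) + ∑ j, g j (y k l j)) N
  have hA : A (x k - y k i.val) = ∑ l ∈ Finset.range i.val, (A (y k l) - A (y k (l + 1))) := by
    rw [Finset.sum_range_sub', hy0, map_sub]
  have hcs : ‖A (x k - y k i.val)‖ ^ 2 ≤
      N * ∑ l ∈ Finset.range N, ‖A (y k l) - A (y k (l + 1))‖ ^ 2 := by
    rw [hA]
    calc _ ≤ (∑ l ∈ Finset.range i.val, ‖A (y k l) - A (y k (l + 1))‖) ^ 2 := by
          gcongr; exact norm_sum_le _ _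
      _ ≤ (∑ l ∈ Finset.range N, ‖A (y k l) - A (y k (l + 1))‖) ^ 2 := by
          gcongr; exact i.2.le
      _ ≤ _ := by
          simpa using sq_sum_le_card_mul_sum_sq (s := Finset.range N)
            (f := fun l => ‖A (y k l) - A (y k (l + 1))‖)
  rw [hyN k, ← hy0 k]
  rw [hy0 k]
  simp only at htot htel
  rw [htel, ← Finset.mul_sum, hy0 k] at htot
  refine le_trans ?_ htot
  calc _ ≤ βmin / (2 * (N : ℝ)) *
        (N * ∑ l ∈ Finset.range N, ‖A (y k l) - A (y k (l + 1))‖ ^ 2) := by gcongr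
    _ = _ := by field_simp
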